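/- arXiv:2603.21400 — 2 statements merged into one kernel-verified Lean document; each statement's English description precedes it below -/
import Mathlib

section
/- Let d ∈ {2,3} and fix s ∈ (0,d). Under Assumptions (A) and (B), one has limsup_{N→∞} (1/N²)·Σ_{1≤i,j≤N, i≠j} |x_{N,i} − x_{N,j}|^{−s} ≤ ∫_{ℝ^d×ℝ^d} |x − y|^{−s}·U(x)·U(y) dx dy, and the double integral on the right-hand side is finite, i.e. there is a constant c_s > 0 (depending on U and s) with ∫_{ℝ^d×ℝ^d} |x − y|^{−s}·U(x)·U(y) dx dy ≤ c_s. -/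
open MeasureTheory Filter Finset Real Topology
noncomputable section

section Averages

variable {E : Type*} [MeasurableSpace E]

/-- The empirical measure of a finite family of points. -/
def empiricalMeasure {N : ℕ} (x : Fin N → E) : Measure E :=
  (N : ENNReal)⁻¹ • ∑ i, Measure.dirac (x i)

lemma isProbabilityMeasure_empiricalMeasure {N : ℕ} (hN : N ≠ 0) (x : Fin N → E) :
    IsProbabilityMeasure (empiricalMeasure x) := by
  refine ⟨?_⟩
  simp only [empiricalMeasure, Measure.smul_apply, Measure.coe_finsetSum, Finset.sum_apply,
    measure_univ, sum_const, card_univ, Fintype.card_fin, nsmul_eq_mul, mul_one, smul_eq_mul]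
  exact ENNReal.inv_mul_cancel (by exact_mod_cast hN) (ENNReal.natCast_ne_top N)

lemma integral_empiricalMeasure [MeasurableSingletonClass E] {N : ℕ} (x : Fin N → E)
    (f : E → ℝ) : ∫ y, f y ∂(empiricalMeasure x) = (N : ℝ)⁻¹ * ∑ i, f (x i) := by
  rw [empiricalMeasure, integral_smul_measure, integral_finsetSum_measure]
  · simp [integral_dirac]
  · intro i _
    exact integrable_dirac (by simp)

variable [TopologicalSpace E] [SecondCountableTopology E]
  [TopologicalSpace.MetrizableSpace E] [BorelSpace E]

/-- Weak convergence of empirical measures passes to averages over pairs of points. -/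
lemma tendsto_average_pairs (x : (N : ℕ) → Fin N → E) (ν : Measure E) [IsProbabilityMeasure ν]
    (h : ∀ f : BoundedContinuousFunction E ℝ,
      Tendsto (fun N : ℕ => (N : ℝ)⁻¹ * ∑ j : Fin N, f (x N j)) atTop (𝓝 (∫ y, f y ∂ν)))
    (g : BoundedContinuousFunction (E × E) ℝ) :
    Tendsto (fun N : ℕ => ((N : ℝ) ^ 2)⁻¹ * ∑ i : Fin N, ∑ j : Fin N, g (x N i, x N j)) atTop
      (𝓝 (∫ z, g z ∂(ν.prod ν))) := by
  have hp (N : ℕ) : IsProbabilityMeasure (empiricalMeasure (x (N + 1))) :=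
    isProbabilityMeasure_empiricalMeasure N.succ_ne_zero _
  let ν' : ProbabilityMeasure E := ⟨ν, inferInstance⟩
  let μ (N : ℕ) : ProbabilityMeasure E := ⟨empiricalMeasure (x (N + 1)), hp N⟩
  have hμ : Tendsto μ atTop (𝓝 ν') := by
    rw [ProbabilityMeasure.tendsto_iff_forall_integral_tendsto]
    intro f
    simpa [μ, ν', integral_empiricalMeasure] using (tendsto_add_atTop_iff_nat 1).2 (h f)
  have hprod : Tendsto (fun N => (μ N).prod (μ N)) atTop (𝓝 (ν'.prod ν')) :=
    (ProbabilityMeasure.continuous_prod.tendsto (ν', ν')).comp (hμ.prodMk_nhds hμ)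
  rw [ProbabilityMeasure.tendsto_iff_forall_integral_tendsto] at hprod
  rw [← tendsto_add_atTop_iff_nat 1]
  refine (hprod g).congr fun N => ?_
  rw [ProbabilityMeasure.toMeasure_prod, integral_prod _ (g.integrable _)]
  simp only [μ, ProbabilityMeasure.coe_mk, integral_empiricalMeasure]
  rw [← Finset.mul_sum, ← mul_assoc, sq, mul_inv]

end Averages

lemma integral_withDensity_prod {E : Type*} [MeasurableSpace E] {μ : Measure E} [SFinite μ]
    {U : E → ℝ} (hU : Integrable U μ) (hU0 : ∀ y, 0 ≤ U y) (g : E × E → ℝ) :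
    ∫ z, g z ∂((μ.withDensity fun y => ENNReal.ofReal (U y)).prod
      (μ.withDensity fun y => ENNReal.ofReal (U y))) =
      ∫ z, g z * U z.1 * U z.2 ∂(μ.prod μ) := by
  have hm : AEMeasurable (fun y => ENNReal.ofReal (U y)) μ := hU.aemeasurable.ennreal_ofReal
  rw [prod_withDensity₀ hm hm]
  refine (integral_withDensity_eq_integral_toReal_smul₀ (hm.comp_fst.mul hm.comp_snd)
    (by simp [ENNReal.mul_lt_top]) g).trans ?_
  refine integral_congr_ae (ae_of_all _ fun z => ?_)
  simp only [Pi.mul_apply, ENNReal.toReal_mul, ENNReal.toReal_ofReal (hU0 _), smul_eq_mul]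
  ring

section Riesz

variable {E : Type*} [NormedAddCommGroup E] [NormedSpace ℝ E] [FiniteDimensional ℝ E]
  [MeasurableSpace E] [BorelSpace E] (μ : Measure E) [μ.IsAddHaarMeasure]

lemma integrableOn_ball_norm_rpow_neg (hd : 1 ≤ Module.finrank ℝ E) {s : ℝ}
    (hs : s < Module.finrank ℝ E) (r : ℝ) :
    IntegrableOn (fun y : E => ‖y‖ ^ (-s)) (Metric.ball 0 r) μ := by
  refine integrableOn_ball_of_norm_le_rpow hd hs (C := 1) (ae_of_all _ fun y => ?_)
    (measurable_norm.pow_const _).aestronglyMeasurable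
  rw [one_mul, Real.norm_of_nonneg (by positivity)]

/-- The mass of the Riesz kernel in small balls around the origin vanishes. -/
lemma exists_setIntegral_ball_norm_rpow_neg_lt (hd : 1 ≤ Module.finrank ℝ E) {s : ℝ}
    (hs : s < Module.finrank ℝ E) {ε : ℝ} (hε : 0 < ε) :
    ∃ η > 0, ∫ y in Metric.ball (0 : E) η, ‖y‖ ^ (-s) ∂μ < ε := by
  have : Nontrivial E := Module.nontrivial_of_finrank_pos (R := ℝ) hd
  have h := tendsto_setIntegral_of_antitone (μ := μ) (f := fun y : E => ‖y‖ ^ (-s))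
    (s := fun n : ℕ => Metric.ball (0 : E) (1 / ((n : ℝ) + 1)))
    (fun n => measurableSet_ball)
    (fun m n hmn => Metric.ball_subset_ball (one_div_le_one_div_of_le (by positivity) (by gcongr)))
    ⟨0, integrableOn_ball_norm_rpow_neg μ hd hs _⟩
  have hnull : μ (⋂ n : ℕ, Metric.ball (0 : E) (1 / ((n : ℝ) + 1))) = 0 := by
    refine measure_mono_null (t := {0}) (fun y hy => ?_) (measure_singleton _)
    by_contra hy0
    obtain ⟨n, hn⟩ := exists_nat_one_div_lt (norm_pos_iff.2 hy0)
    have := Set.mem_iInter.1 hy n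
    rw [mem_ball_zero_iff] at this
    linarith
  rw [setIntegral_measure_zero _ hnull] at h
  obtain ⟨n, hn⟩ := (h.eventually_lt_const hε).exists
  exact ⟨_, by positivity, hn⟩

/-- Comparison of a Riesz sum over separated points with the integral of the kernel. -/
lemma sum_norm_rpow_neg_mul_measure_ball_le (hd : 1 ≤ Module.finrank ℝ E) {s : ℝ} (hs0 : 0 ≤ s)
    (hs : s < Module.finrank ℝ E) {ι : Type*} (t : Finset ι) (p : ι → E) {r η : ℝ} (hr : 0 < r)
    (hsep : ∀ i ∈ t, ∀ j ∈ t, i ≠ j → 2 * r ≤ ‖p i - p j‖)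
    (hlow : ∀ i ∈ t, 2 * r ≤ ‖p i‖) (hup : ∀ i ∈ t, ‖p i‖ < η) :
    (∑ i ∈ t, ‖p i‖ ^ (-s)) * μ.real (Metric.ball 0 r) ≤
      (3 / 2) ^ s * ∫ y in Metric.ball (0 : E) (3 / 2 * η), ‖y‖ ^ (-s) ∂μ := by
  have hsub : ∀ i ∈ t, Metric.ball (p i) r ⊆ Metric.ball 0 (3 / 2 * η) := by
    intro i hi y hy
    rw [mem_ball_iff_norm] at hy
    rw [mem_ball_zero_iff]
    have := norm_le_norm_add_norm_sub' y (p i)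
    linarith [hlow i hi, hup i hi]
  have hfint := integrableOn_ball_norm_rpow_neg μ hd hs (3 / 2 * η)
  have hterm : ∀ i ∈ t, ‖p i‖ ^ (-s) * μ.real (Metric.ball 0 r) ≤
      (3 / 2) ^ s * ∫ y in Metric.ball (p i) r, ‖y‖ ^ (-s) ∂μ := by
    intro i hi
    have hball : μ.real (Metric.ball 0 r) = μ.real (Metric.ball (p i) r) := by
      exact (Measure.addHaar_real_ball_center μ (p i) r).symm
    rw [hball, mul_comm, ← smul_eq_mul, ← setIntegral_const, ← integral_const_mul]
    refine setIntegral_mono_on (integrableOn_const measure_ball_lt_top.ne)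
      ((hfint.mono_set (hsub i hi)).const_mul _) measurableSet_ball fun y hy => ?_
    rw [mem_ball_iff_norm] at hy
    have h1 := norm_le_norm_add_norm_sub' y (p i)
    have h2 := norm_le_norm_add_norm_sub (p i) y
    rw [norm_sub_rev] at h2
    have h3 := hlow i hi
    have hy0 : 0 < ‖y‖ := by
      have := norm_le_norm_add_norm_sub' (p i) y
      rw [norm_sub_rev] at this
      linarith
    have hle : ‖y‖ ≤ 3 / 2 * ‖p i‖ := by linarith
    have := Real.rpow_le_rpow_of_nonpos hy0 hle (neg_nonpos.2 hs0)
    rw [Real.mul_rpow (by norm_num) (norm_nonneg _), Real.rpow_neg (by norm_num)] at this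
    have hc : (0 : ℝ) < (3 / 2) ^ s := by positivity
    rwa [inv_mul_le_iff₀ hc] at this
  have hdisj : Set.Pairwise (t : Set ι) (Function.onFun Disjoint fun i => Metric.ball (p i) r) := by
    intro i hi j hj hij
    refine Metric.ball_disjoint_ball ?_
    rw [dist_eq_norm]
    linarith [hsep i hi j hj hij]
  calc (∑ i ∈ t, ‖p i‖ ^ (-s)) * μ.real (Metric.ball 0 r)
      ≤ ∑ i ∈ t, (3 / 2) ^ s * ∫ y in Metric.ball (p i) r, ‖y‖ ^ (-s) ∂μ := by
        rw [Finset.sum_mul]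
        exact Finset.sum_le_sum hterm
    _ = (3 / 2) ^ s * ∫ y in ⋃ i ∈ t, Metric.ball (p i) r, ‖y‖ ^ (-s) ∂μ := by
        rw [← Finset.mul_sum, integral_biUnion_finset t (fun _ _ => measurableSet_ball) hdisj
          fun i hi => hfint.mono_set (hsub i hi)]
    _ ≤ _ := by
        refine mul_le_mul_of_nonneg_left (setIntegral_mono_set hfint
          (ae_of_all _ fun y => by positivity) ?_) (by positivity)
        exact (Set.iUnion₂_subset hsub).eventuallyLE

/-- The Riesz energy of a bounded compactly supported density is finite. -/
lemma integrable_riesz_prod (hd : 1 ≤ Module.finrank ℝ E) {s : ℝ}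
    (hs : s < Module.finrank ℝ E) {U : E → ℝ} (hU : Integrable U μ)
    (hbdd : ∃ M : ℝ, ∀ y, ‖U y‖ ≤ M) (hsupp : HasCompactSupport U) :
    Integrable (fun z : E × E => ‖z.1 - z.2‖ ^ (-s) * U z.1 * U z.2) (μ.prod μ) := by
  obtain ⟨M, hM⟩ := hbdd
  obtain ⟨R, -, hR⟩ := hsupp.isCompact.isBounded.exists_pos_norm_lt
  have hg : Integrable ((Metric.ball (0 : E) (R + R)).indicator fun y => ‖y‖ ^ (-s)) μ :=
    (integrableOn_ball_norm_rpow_neg μ hd hs _).integrable_indicator measurableSet_ball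
  have h := (hU.convolution_integrand (ContinuousLinearMap.mul ℝ ℝ) hg).bdd_mul
    (hU.aestronglyMeasurable.comp_fst (ν := μ)) (ae_of_all _ fun z => hM z.1)
  refine h.congr (ae_of_all _ fun z => ?_)
  simp only [ContinuousLinearMap.mul_apply']
  by_cases h1 : U z.1 = 0
  · simp [h1]
  by_cases h2 : U z.2 = 0
  · simp [h2]
  have hz : z.1 - z.2 ∈ Metric.ball (0 : E) (R + R) := by
    rw [mem_ball_zero_iff]
    exact (norm_sub_le _ _).trans_lt
      (add_lt_add (hR _ (subset_tsupport U h1)) (hR _ (subset_tsupport U h2)))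
  rw [Set.indicator_of_mem hz]
  ring

end Riesz

/-- A bounded continuous minorant of the Riesz kernel, agreeing with it outside the ball of
radius `η`. -/
def truncatedRiesz {E : Type*} [SeminormedAddCommGroup E] (s η : ℝ) (y : E) : ℝ :=
  ‖y‖ * max ‖y‖ η ^ (-(s + 1))

section Truncated

variable {E : Type*} [SeminormedAddCommGroup E] {s η : ℝ}

lemma truncatedRiesz_nonneg (hη : 0 < η) (y : E) : 0 ≤ truncatedRiesz s η y := by
  have : 0 < max ‖y‖ η := lt_max_of_lt_right hη
  unfold truncatedRiesz
  positivity

lemma continuous_truncatedRiesz (hη : 0 < η) : Continuous (truncatedRiesz s η : E → ℝ) := by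
  refine continuous_norm.mul ((continuous_norm.max continuous_const).rpow_const fun y => ?_)
  exact Or.inl (lt_max_of_lt_right hη).ne'

lemma mul_rpow_neg_add_one {a : ℝ} (ha : 0 < a) : a * a ^ (-(s + 1)) = a ^ (-s) := by
  rw [mul_comm, ← Real.rpow_add_one ha.ne']
  congr 1
  ring

lemma truncatedRiesz_le (hs : 0 ≤ s) (hη : 0 < η) (y : E) : truncatedRiesz s η y ≤ η ^ (-s) := by
  have hm : 0 < max ‖y‖ η := lt_max_of_lt_right hη
  calc truncatedRiesz s η y ≤ max ‖y‖ η * max ‖y‖ η ^ (-(s + 1)) := by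
        unfold truncatedRiesz; gcongr; exact le_max_left _ _
    _ = max ‖y‖ η ^ (-s) := mul_rpow_neg_add_one hm
    _ ≤ η ^ (-s) := Real.rpow_le_rpow_of_nonpos hη (le_max_right _ _) (by linarith)

lemma truncatedRiesz_le_norm_rpow (hs : 0 ≤ s) (y : E) :
    truncatedRiesz s η y ≤ ‖y‖ ^ (-s) := by
  rcases (norm_nonneg y).eq_or_lt with h | h
  · rw [truncatedRiesz, ← h, zero_mul]
    positivity
  · rw [← mul_rpow_neg_add_one h, truncatedRiesz]
    exact mul_le_mul_of_nonneg_left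
      (Real.rpow_le_rpow_of_nonpos h (le_max_left _ _) (by linarith)) h.le

lemma truncatedRiesz_of_le (hη : 0 < η) {y : E} (hy : η ≤ ‖y‖) :
    truncatedRiesz s η y = ‖y‖ ^ (-s) := by
  rw [truncatedRiesz, max_eq_left hy, mul_rpow_neg_add_one (hη.trans_le hy)]

end Truncated

/-- The Riesz energy of a separated configuration exceeds its truncated energy by at most a
multiple of the mass of the Riesz kernel near the origin. -/
lemma sum_riesz_le_sum_truncatedRiesz_add {E : Type*} [NormedAddCommGroup E] [NormedSpace ℝ E]
    [FiniteDimensional ℝ E] [MeasurableSpace E] [BorelSpace E] (μ : Measure E)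
    [μ.IsAddHaarMeasure] (hd : 1 ≤ Module.finrank ℝ E) {s : ℝ} (hs0 : 0 ≤ s)
    (hs : s < Module.finrank ℝ E) {N : ℕ} (x : Fin N → E) {r η : ℝ} (hr : 0 < r) (hη : 0 < η)
    (hsep : ∀ i j, i ≠ j → 2 * r ≤ ‖x i - x j‖) :
    (∑ i, ∑ j, if i = j then 0 else ‖x i - x j‖ ^ (-s)) ≤
      (∑ i, ∑ j, truncatedRiesz s η (x i - x j)) +
        N * ((3 / 2) ^ s * (∫ y in Metric.ball (0 : E) (3 / 2 * η), ‖y‖ ^ (-s) ∂μ) /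
          μ.real (Metric.ball 0 r)) := by
  have hvol : 0 < μ.real (Metric.ball (0 : E) r) :=
    ENNReal.toReal_pos (Metric.measure_ball_pos μ 0 hr).ne' measure_ball_lt_top.ne
  have hrow (i : Fin N) : (∑ j, if i = j then 0 else ‖x i - x j‖ ^ (-s)) ≤
      (∑ j, truncatedRiesz s η (x i - x j)) +
        (3 / 2) ^ s * (∫ y in Metric.ball (0 : E) (3 / 2 * η), ‖y‖ ^ (-s) ∂μ) /
          μ.real (Metric.ball 0 r) := by
    have hclose := sum_norm_rpow_neg_mul_measure_ball_le μ hd hs0 hs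
      {j | i ≠ j ∧ ‖x i - x j‖ < η} (fun j => x i - x j) hr
      (fun j _ k _ hjk => by
        rw [sub_sub_sub_cancel_left]
        exact hsep k j hjk.symm)
      (fun j hj => hsep i j (Finset.mem_filter.1 hj).2.1)
      (fun j hj => (Finset.mem_filter.1 hj).2.2)
    rw [← le_div_iff₀ hvol, Finset.sum_filter] at hclose
    refine le_trans ?_ (add_le_add_right hclose _)
    rw [← Finset.sum_add_distrib]
    refine Finset.sum_le_sum fun j _ => ?_
    have h0 := truncatedRiesz_nonneg (s := s) hη (x i - x j)
    by_cases hij : i = j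
    · simpa [hij] using truncatedRiesz_nonneg (s := s) hη (0 : E)
    · rcases lt_or_ge ‖x i - x j‖ η with h | h
      · simpa [hij, h] using h0
      · simp [hij, h.not_gt, truncatedRiesz_of_le hη h]
  calc _ ≤ _ := Finset.sum_le_sum fun i _ => hrow i
    _ = _ := by simp [Finset.sum_add_distrib]

/-- Riesz-energy bound. Under Assumptions (A) and (B), for `s ∈ (0,d)`,
`limsup_N (1/N²)·Σ_{i≠j} |x_i − x_j|^{−s} ≤ ∫∫ |x−y|^{−s} U(x) U(y) dx dy`, and the
double integral is finite (bounded by some constant `c_s > 0`). -/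
theorem stmt_6
    (d : ℕ) (hd : d = 2 ∨ d = 3)
    (s : ℝ) (hs0 : 0 < s) (hsd : s < d)
    (U : EuclideanSpace ℝ (Fin d) → ℝ)
    (hU_nonneg : ∀ y, 0 ≤ U y)
    (hU_bdd : ∃ M : ℝ, ∀ y, U y ≤ M)
    (hU_supp : HasCompactSupport U)
    (hU_int : ∫ y, U y = 1)
    (x : (N : ℕ) → Fin N → EuclideanSpace ℝ (Fin d))
    (hx_supp : ∀ N (j : Fin N), x N j ∈ tsupport U)
    (hA : ∀ f : EuclideanSpace ℝ (Fin d) → ℂ, Continuous f → (∃ M, ∀ y, ‖f y‖ ≤ M) →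
      Tendsto (fun N : ℕ => (N : ℂ)⁻¹ * ∑ j : Fin N, f (x N j)) atTop
        (𝓝 (∫ y, f y * (U y : ℂ))))
    (ℓ : ℝ) (hℓ : 0 < ℓ)
    (hB : ∀ N : ℕ, ∀ i j : Fin N, i ≠ j →
      ℓ * (N : ℝ) ^ (-(1 : ℝ) / d) ≤ ‖x N i - x N j‖) :
    Integrable (fun z : EuclideanSpace ℝ (Fin d) × EuclideanSpace ℝ (Fin d) =>
        ‖z.1 - z.2‖ ^ (-s) * U z.1 * U z.2) ∧
    limsup
      (fun N : ℕ => ((N : ℝ) ^ 2)⁻¹ * ∑ i : Fin N, ∑ j : Fin N,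
        if i = j then 0 else ‖x N i - x N j‖ ^ (-s)) atTop
      ≤ ∫ z : EuclideanSpace ℝ (Fin d) × EuclideanSpace ℝ (Fin d),
          ‖z.1 - z.2‖ ^ (-s) * U z.1 * U z.2 ∧
    ∃ c_s : ℝ, 0 < c_s ∧
      (∫ z : EuclideanSpace ℝ (Fin d) × EuclideanSpace ℝ (Fin d),
          ‖z.1 - z.2‖ ^ (-s) * U z.1 * U z.2) ≤ c_s := by
  have hdim : Module.finrank ℝ (EuclideanSpace ℝ (Fin d)) = d := finrank_euclideanSpace_fin
  have hd1 : 1 ≤ Module.finrank ℝ (EuclideanSpace ℝ (Fin d)) := by omega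
  have hs : s < Module.finrank ℝ (EuclideanSpace ℝ (Fin d)) := by rwa [hdim]
  have hdpos : (d : ℝ) ≠ 0 := by
    have : d ≠ 0 := by omega
    exact_mod_cast this
  have hU : Integrable U := by
    by_contra h
    rw [integral_undef h] at hU_int
    exact zero_ne_one hU_int
  have hI := integrable_riesz_prod volume hd1 hs hU
    (hU_bdd.imp fun M hM y => by rw [Real.norm_of_nonneg (hU_nonneg y)]; exact hM y) hU_supp
  refine ⟨hI, ?_, _, lt_max_of_lt_left one_pos, le_max_right _ _⟩
  set ν : Measure (EuclideanSpace ℝ (Fin d)) := volume.withDensity fun y => ENNReal.ofReal (U y)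
    with hν
  have hνprob : IsProbabilityMeasure ν := by
    refine ⟨?_⟩
    rw [hν, withDensity_apply _ MeasurableSet.univ, setLIntegral_univ,
      ← ofReal_integral_eq_lintegral_ofReal hU (ae_of_all _ hU_nonneg), hU_int, ENNReal.ofReal_one]
  have hweak (f : BoundedContinuousFunction (EuclideanSpace ℝ (Fin d)) ℝ) :
      Tendsto (fun N : ℕ => (N : ℝ)⁻¹ * ∑ j : Fin N, f (x N j)) atTop (𝓝 (∫ y, f y ∂ν)) := by
    have hlim := hA (fun y => (f y : ℂ)) (Complex.continuous_ofReal.comp f.continuous)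
      ⟨‖f‖, fun y => by simpa using f.norm_coe_le_norm y⟩
    have hfint : ∫ y, f y ∂ν = ∫ y, f y * U y := by
      refine (integral_withDensity_eq_integral_toReal_smul₀ hU.aemeasurable.ennreal_ofReal
        (by simp) _).trans (integral_congr_ae (ae_of_all _ fun y => ?_))
      simp only [ENNReal.toReal_ofReal (hU_nonneg y), smul_eq_mul, mul_comm]
    rw [hfint]
    simp_rw [← Complex.ofReal_mul] at hlim
    rw [integral_complex_ofReal] at hlim
    have := (Complex.continuous_re.tendsto _).comp hlim
    rw [Complex.ofReal_re] at this
    refine this.congr fun N => ?_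
    simp only [Function.comp_apply, ← Complex.ofReal_sum, ← Complex.ofReal_natCast,
      ← Complex.ofReal_inv, ← Complex.ofReal_mul, Complex.ofReal_re]
  set v : ℝ := volume.real (Metric.ball (0 : EuclideanSpace ℝ (Fin d)) 1)
  have hv : 0 < v :=
    ENNReal.toReal_pos (Metric.measure_ball_pos volume 0 one_pos).ne' measure_ball_lt_top.ne
  set C : ℝ := (3 / 2) ^ s / ((ℓ / 2) ^ d * v) with hC
  have hCpos : 0 < C := by positivity
  refine le_of_forall_pos_le_add fun ε hε => ?_
  obtain ⟨δ, hδ, hδε⟩ := exists_setIntegral_ball_norm_rpow_neg_lt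
    (volume : Measure (EuclideanSpace ℝ (Fin d))) hd1 hs (ε := ε / 2 / C) (by positivity)
  have hη : 0 < 2 / 3 * δ := by positivity
  let g : BoundedContinuousFunction (EuclideanSpace ℝ (Fin d) × EuclideanSpace ℝ (Fin d)) ℝ :=
    BoundedContinuousFunction.ofNormedAddCommGroup
      (fun z => truncatedRiesz s (2 / 3 * δ) (z.1 - z.2))
      ((continuous_truncatedRiesz hη).comp (continuous_fst.sub continuous_snd))
      ((2 / 3 * δ) ^ (-s)) fun z => by
        rw [Real.norm_of_nonneg (truncatedRiesz_nonneg hη _)]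
        exact truncatedRiesz_le hs0.le hη _
  have hg (z) : g z = truncatedRiesz s (2 / 3 * δ) (z.1 - z.2) := rfl
  have hgI : ∫ z, g z ∂(ν.prod ν) ≤
      ∫ z : EuclideanSpace ℝ (Fin d) × EuclideanSpace ℝ (Fin d),
        ‖z.1 - z.2‖ ^ (-s) * U z.1 * U z.2 := by
    rw [hν, integral_withDensity_prod hU hU_nonneg]
    refine integral_mono_of_nonneg (ae_of_all _ fun z => ?_) hI (ae_of_all _ fun z => ?_)
    · exact mul_nonneg (mul_nonneg (truncatedRiesz_nonneg hη _) (hU_nonneg _)) (hU_nonneg _)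
    · exact mul_le_mul_of_nonneg_right (mul_le_mul_of_nonneg_right
        (truncatedRiesz_le_norm_rpow hs0.le _) (hU_nonneg _)) (hU_nonneg _)
  have hev := (tendsto_average_pairs x ν hweak g).eventually_lt_const
    (show _ < (∫ z, g z ∂(ν.prod ν)) + ε / 2 by linarith)
  refine limsup_le_of_le (isCoboundedUnder_le_of_le atTop (x := 0) fun N => by positivity) ?_
  filter_upwards [hev, eventually_gt_atTop 0] with N hN hN0
  have hNpos : (0 : ℝ) < N := by exact_mod_cast hN0
  set r : ℝ := ℓ / 2 * (N : ℝ) ^ (-(1 : ℝ) / d) with hr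
  have hrpos : 0 < r := by positivity
  have hvol : volume.real (Metric.ball (0 : EuclideanSpace ℝ (Fin d)) r) =
      (ℓ / 2) ^ d * v / N := by
    rw [measureReal_def, Measure.addHaar_ball_of_pos _ _ hrpos, ENNReal.toReal_mul,
      ENNReal.toReal_ofReal (by positivity), hdim, hr, mul_pow, ← Real.rpow_natCast (_ ^ _),
      ← Real.rpow_mul hNpos.le, div_mul_cancel₀ _ hdpos, Real.rpow_neg_one]
    change (ℓ / 2) ^ d * (N : ℝ)⁻¹ * v = _
    ring
  have hsum := sum_riesz_le_sum_truncatedRiesz_add volume hd1 hs0.le hs (x N) hrpos hη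
    fun i j hij => by
      have := hB N i j hij
      rw [hr]
      linarith
  rw [hvol, show 3 / 2 * (2 / 3 * δ) = δ by ring] at hsum
  have hmul := mul_le_mul_of_nonneg_left hsum (show 0 ≤ ((N : ℝ) ^ 2)⁻¹ by positivity)
  have herr : ((N : ℝ) ^ 2)⁻¹ * (N * ((3 / 2) ^ s *
      (∫ y in Metric.ball (0 : EuclideanSpace ℝ (Fin d)) δ, ‖y‖ ^ (-s)) /
        ((ℓ / 2) ^ d * v / N))) =
      C * ∫ y in Metric.ball (0 : EuclideanSpace ℝ (Fin d)) δ, ‖y‖ ^ (-s) := by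
    rw [hC]
    field_simp
  rw [mul_add, herr] at hmul
  rw [lt_div_iff₀' hCpos] at hδε
  simp only [hg] at hN hgI
  linarith
end
end

section
/- Let d = 3, λ > 0, and g_λ(x) = e^{−λ|x|}/(4π|x|). Under Assumption (A), let p : ℝ³ → ℂ be a continuous function. Then the functions Ψ_N(x) := (1/N)·Σ_{j=1}^N p(x_{N,j})·g_λ(x − x_{N,j}) converge strongly in L²(ℝ³) to the function (g_λ * (p·U))(x) = ∫_{ℝ³} g_λ(x − y)·p(y)·U(y) dy as N → ∞; in particular lim_{N→∞} ‖Ψ_N‖_{L²(ℝ³)} = ‖g_λ * (p·U)‖_{L²(ℝ³)}. (This is the singular part of the recovery sequence in the Γ-limsup construction, specialized to the free Laplacian A = 0, V = 0, for which G₀^λ(x,y) = g_λ(x − y) and R₀^λ f = g_λ * f.) -/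
open MeasureTheory Filter Finset Real Topology

noncomputable section

theorem IsCompact.tendsto_of_forall_tendsto_inner {H ι : Type*} [NormedAddCommGroup H]
    [InnerProductSpace ℂ H] {S : Set H} (hS : IsCompact S) {l : Filter ι} {u : ι → H} {z : H}
    (hu : ∀ᶠ n in l, u n ∈ S)
    (hw : ∀ v : H, Tendsto (fun n => inner ℂ v (u n)) l (𝓝 (inner ℂ v z))) :
    Tendsto u l (𝓝 z) := by
  refine hS.tendsto_nhds_of_unique_mapClusterPt hu fun y _ hy => ?_
  obtain ⟨F, hF, hFy⟩ := mapClusterPt_iff_ultrafilter.1 hy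
  refine ext_inner_left ℂ fun v => ?_
  exact tendsto_nhds_unique (tendsto_const_nhds.inner hFy) ((hw v).mono_left hF)

theorem tendsto_inv_mul_sum_of_continuous {E : Type*} [TopologicalSpace E] [T2Space E]
    [LocallyCompactSpace E] [MeasureSpace E]
    {U : E → ℝ} (hU : HasCompactSupport U) {x : (N : ℕ) → Fin N → E}
    (hx : ∀ N (j : Fin N), x N j ∈ tsupport U)
    (hA : ∀ f : E → ℂ, Continuous f → (∃ M, ∀ y, ‖f y‖ ≤ M) →
      Tendsto (fun N : ℕ => (N : ℂ)⁻¹ * ∑ j : Fin N, f (x N j)) atTop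
        (𝓝 (∫ y, f y * (U y : ℂ))))
    {f : E → ℂ} (hf : Continuous f) :
    Tendsto (fun N : ℕ => (N : ℂ)⁻¹ * ∑ j : Fin N, f (x N j)) atTop
        (𝓝 (∫ y, f y * (U y : ℂ))) := by
  obtain ⟨χ, h1, -, hχ, -⟩ := exists_continuous_one_zero_of_isCompact hU.isCompact
    isClosed_empty (Set.disjoint_empty _)
  have hc : Continuous fun y => (χ y : ℂ) * f y := by fun_prop
  have hs : HasCompactSupport fun y => (χ y : ℂ) * f y :=
    (hχ.comp_left (g := fun r : ℝ => (r : ℂ)) (by simp)).mul_right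
  have key := hA _ hc (hs.exists_bound_of_continuous hc)
  convert key using 1
  · funext N
    congr 1
    refine Finset.sum_congr rfl fun j _ => ?_
    simp [h1 (hx N j)]
  · congr 2
    funext y
    by_cases hy : y ∈ tsupport U
    · simp [h1 hy]
    · simp [image_eq_zero_of_notMem_tsupport hy]

theorem tendsto_inv_smul_sum_of_continuous {E H : Type*} [TopologicalSpace E] [T2Space E]
    [LocallyCompactSpace E] [MeasureSpace E]
    [NormedAddCommGroup H] [InnerProductSpace ℂ H] [CompleteSpace H]
    {U : E → ℝ} (hU : HasCompactSupport U) {x : (N : ℕ) → Fin N → E}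
    (hx : ∀ N (j : Fin N), x N j ∈ tsupport U)
    (hA : ∀ f : E → ℂ, Continuous f → (∃ M, ∀ y, ‖f y‖ ≤ M) →
      Tendsto (fun N : ℕ => (N : ℂ)⁻¹ * ∑ j : Fin N, f (x N j)) atTop
        (𝓝 (∫ y, f y * (U y : ℂ))))
    {F : E → H} (hF : Continuous F) (hFi : Integrable fun y => (U y : ℂ) • F y) :
    Tendsto (fun N : ℕ => (N : ℂ)⁻¹ • ∑ j : Fin N, F (x N j)) atTop
        (𝓝 (∫ y, (U y : ℂ) • F y)) := by
  let : NormedSpace ℝ H := NormedSpace.complexToReal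
  have hcomp : IsCompact (closure (convexHull ℝ (F '' tsupport U))) :=
    (hU.isCompact.image hF).totallyBounded.convexHull.closure.isCompact_of_isClosed
      isClosed_closure
  refine hcomp.tendsto_of_forall_tendsto_inner ?_ fun v => ?_
  · filter_upwards [eventually_ge_atTop 1] with N hN
    refine subset_closure ?_
    have hN' : (N : ℝ) ≠ 0 := by positivity
    have := (convex_convexHull ℝ (F '' tsupport U)).sum_mem (t := Finset.univ)
      (w := fun _ : Fin N => (N : ℝ)⁻¹) (z := fun j => F (x N j))
      (fun _ _ => by positivity) (by simp [hN'])
      (fun j _ => subset_convexHull ℝ _ ⟨_, hx N j, rfl⟩)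
    rw [← Finset.smul_sum] at this
    convert this using 1
    rw [← Complex.coe_smul]
    simp
  · rw [← integral_inner hFi]
    simp only [inner_smul_right, inner_sum]
    have := tendsto_inv_mul_sum_of_continuous hU hx hA (f := fun y => inner ℂ v (F y))
      (by fun_prop)
    simpa only [mul_comm] using this

theorem integrable_exp_neg_mul_norm_div_norm {lam : ℝ} (hlam : 0 < lam) :
    Integrable fun v : EuclideanSpace ℝ (Fin 3) => Real.exp (-(lam * ‖v‖)) / (4 * π * ‖v‖) := by
  refine (integrable_fun_norm_addHaar volume
    (f := fun r => Real.exp (-(lam * r)) / (4 * π * r))).2 ?_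
  have h := (integrableOn_rpow_mul_exp_neg_mul_rpow (p := 1) (s := 1) (by norm_num)
    one_pos hlam).const_mul (4 * π)⁻¹
  refine IntegrableOn.congr_fun h (fun r hr => ?_) measurableSet_Ioi
  have hr : r ≠ 0 := ne_of_gt hr
  simp
  field_simp

theorem memLp_exp_neg_mul_norm_div_norm {lam : ℝ} (hlam : 0 < lam) :
    MemLp (fun v : EuclideanSpace ℝ (Fin 3) => Real.exp (-(lam * ‖v‖)) / (4 * π * ‖v‖))
      2 volume := by
  rw [memLp_two_iff_integrable_sq
    (integrable_exp_neg_mul_norm_div_norm hlam).aestronglyMeasurable]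
  refine (integrable_fun_norm_addHaar volume
    (f := fun r => (Real.exp (-(lam * r)) / (4 * π * r)) ^ 2)).2 ?_
  have h := (integrableOn_rpow_mul_exp_neg_mul_rpow (p := 1) (s := 0) (by norm_num)
    one_pos (b := 2 * lam) (by positivity)).const_mul ((4 * π) ^ 2)⁻¹
  refine IntegrableOn.congr_fun h (fun r hr => ?_) measurableSet_Ioi
  have hr : r ≠ 0 := ne_of_gt hr
  have : Real.exp (-(2 * lam * r)) = Real.exp (-(lam * r)) ^ 2 := by
    rw [← Real.exp_nat_mul]; congr 1; push_cast; ring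
  simp [this]
  field_simp

section Translates

variable {E : Type*} [NormedAddCommGroup E] [InnerProductSpace ℝ E] [FiniteDimensional ℝ E]
  [MeasurableSpace E] [BorelSpace E]

theorem mk_neg_vadd_toLp_ae_eq {g : E → ℂ} (hg : MemLp g 2 volume) (w : E) :
    (DomAddAct.mk (-w) +ᵥ hg.toLp g : Lp ℂ 2 (volume : Measure E)) =ᵐ[volume]
      fun y => g (y - w) := by
  rw [DomAddAct.mk_vadd_toLp]
  refine (MemLp.coeFn_toLp _).trans (.of_forall fun y => ?_)
  simp only [vadd_eq_add, neg_add_eq_sub]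

/-- The Bochner integral of weighted translates of an `L²` function is computed pointwise. -/
theorem integral_smul_translate_ae_eq
    {g : E → ℂ} (hg1 : Integrable g) (hg2 : MemLp g 2 volume)
    {c : E → ℂ} (hc : Integrable c)
    (hF : Integrable fun w => c w • (DomAddAct.mk (-w) +ᵥ hg2.toLp g)) :
    (∫ w, c w • (DomAddAct.mk (-w) +ᵥ hg2.toLp g) : Lp ℂ 2 (volume : Measure E)) =ᵐ[volume]
      fun y => ∫ w, g (y - w) * c w := by
  have hprod : Integrable (fun z : E × E => g (z.1 - z.2) * c z.2) :=
    (hc.convolution_integrand (ContinuousLinearMap.mul ℂ ℂ) hg1).congr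
      (.of_forall fun z => mul_comm _ _)
  refine ae_eq_of_forall_setIntegral_eq_of_sigmaFinite (fun s hs hs' => ?_)
    (fun s _ _ => hprod.integral_prod_left.integrableOn) fun s hs hs' => ?_
  · have : Fact (volume s < ⊤) := ⟨hs'⟩
    exact ((Lp.memLp _).restrict s).integrable one_le_two
  · rw [← L2.inner_indicatorConstLp_one (𝕜 := ℂ) hs hs'.ne, ← integral_inner hF,
      integral_integral_swap
        (by
          rw [← Measure.restrict_univ (μ := (volume : Measure E)), Measure.restrict_restrict hs,
            Set.inter_univ, Measure.prod_restrict]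
          exact hprod.integrableOn)]
    refine integral_congr_ae (.of_forall fun w => ?_)
    simp only [inner_smul_right]
    rw [L2.inner_indicatorConstLp_one, integral_mul_const, mul_comm]
    congr 1
    exact integral_congr_ae (ae_restrict_of_ae (mk_neg_vadd_toLp_ae_eq hg2 w))

theorem continuous_smul_translate {p : E → ℂ} (hp : Continuous p)
    (G : Lp ℂ 2 (volume : Measure E)) :
    Continuous fun w => p w • (DomAddAct.mk (-w) +ᵥ G) := by
  have h2 : Fact ((2 : ENNReal) ≠ ⊤) := ⟨ENNReal.ofNat_ne_top⟩
  exact hp.smul ((DomAddAct.continuous_mk.comp continuous_neg).vadd continuous_const)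

theorem coeFn_inv_smul_sum_translate {g : E → ℂ} (hg2 : MemLp g 2 volume) (p : E → ℂ)
    {N : ℕ} (x : Fin N → E) :
    ((N : ℂ)⁻¹ • ∑ j, p (x j) • (DomAddAct.mk (-x j) +ᵥ hg2.toLp g) : Lp ℂ 2 (volume : Measure E))
      =ᵐ[volume] fun y => (N : ℂ)⁻¹ * ∑ j, p (x j) * g (y - x j) := by
  have hj : ∀ j, (p (x j) • (DomAddAct.mk (-x j) +ᵥ hg2.toLp g) : Lp ℂ 2 (volume : Measure E))
      =ᵐ[volume] fun y => p (x j) * g (y - x j) := fun j => by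
    filter_upwards [Lp.coeFn_smul (p (x j)) (DomAddAct.mk (-x j) +ᵥ hg2.toLp g),
      mk_neg_vadd_toLp_ae_eq hg2 (x j)] with y h1 h2
    rw [h1, Pi.smul_apply, h2, smul_eq_mul]
  filter_upwards [Lp.coeFn_smul (N : ℂ)⁻¹
      (∑ j, p (x j) • (DomAddAct.mk (-x j) +ᵥ hg2.toLp g) : Lp ℂ 2 (volume : Measure E)),
    Lp.coeFn_finsetSum Finset.univ fun j => p (x j) • (DomAddAct.mk (-x j) +ᵥ hg2.toLp g),
    ae_all_iff.2 hj] with y h1 h2 h3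
  rw [h1, Pi.smul_apply, h2, smul_eq_mul, Finset.sum_apply]
  simp only [h3]

end Translates

theorem integrable_ofReal_smul_of_hasCompactSupport {E H : Type*} [TopologicalSpace E]
    [T2Space E] [SecondCountableTopology E] [MeasurableSpace E] [BorelSpace E] {μ : Measure E}
    [NormedAddCommGroup H] [NormedSpace ℂ H] {U : E → ℝ} (hU : Integrable U μ)
    (hUc : HasCompactSupport U) {F : E → H} (hF : Continuous F) :
    Integrable (fun w => (U w : ℂ) • F w) μ := by
  rw [← integrableOn_iff_integrable_of_support_subset (s := tsupport U)]
  · exact hU.ofReal.integrableOn.smul_continuousOn hF.continuousOn hUc.isCompact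
  · intro w hw
    refine subset_tsupport U fun h => hw ?_
    simp [h]

/-- (d = 3, free Green function `g_λ(x) = e^{−λ|x|}/(4π|x|)`). Under
Assumption (A), for continuous `p : ℝ³ → ℂ`, the functions
`Ψ_N = (1/N)·Σ_j p(x_{N,j})·g_λ(·−x_{N,j})` converge strongly in `L²(ℝ³)` to
`g_λ * (p·U)`; in particular their `L²` norms converge. -/
theorem stmt_14
    (lam : ℝ) (hlam : 0 < lam)
    (U : EuclideanSpace ℝ (Fin 3) → ℝ)
    (hU_nonneg : ∀ y, 0 ≤ U y)
    (hU_bdd : ∃ M : ℝ, ∀ y, U y ≤ M)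
    (hU_supp : HasCompactSupport U)
    (hU_int : ∫ y, U y = 1)
    (x : (N : ℕ) → Fin N → EuclideanSpace ℝ (Fin 3))
    (hx_supp : ∀ N (j : Fin N), x N j ∈ tsupport U)
    (hA : ∀ f : EuclideanSpace ℝ (Fin 3) → ℂ, Continuous f → (∃ M, ∀ y, ‖f y‖ ≤ M) →
      Tendsto (fun N : ℕ => (N : ℂ)⁻¹ * ∑ j : Fin N, f (x N j)) atTop
        (𝓝 (∫ y, f y * (U y : ℂ))))
    (p : EuclideanSpace ℝ (Fin 3) → ℂ)
    (hp : Continuous p)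
    (g : EuclideanSpace ℝ (Fin 3) → ℝ)
    (hg : g = fun v => Real.exp (-(lam * ‖v‖)) / (4 * π * ‖v‖))
    (Ψ : (N : ℕ) → EuclideanSpace ℝ (Fin 3) → ℂ)
    (hΨ : ∀ N : ℕ, Ψ N = fun y =>
      (N : ℂ)⁻¹ * ∑ j : Fin N, p (x N j) * ((g (y - x N j) : ℝ) : ℂ))
    (conv : EuclideanSpace ℝ (Fin 3) → ℂ)
    (hconv : conv = fun y => ∫ w, ((g (y - w) : ℝ) : ℂ) * p w * (U w : ℂ)) :
    Tendsto (fun N : ℕ => eLpNorm (fun y => Ψ N y - conv y) 2 volume) atTop (𝓝 0) ∧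
    Tendsto (fun N : ℕ => eLpNorm (Ψ N) 2 volume) atTop (𝓝 (eLpNorm conv 2 volume)) := by
  have hUi : Integrable U := .of_integral_ne_zero (by rw [hU_int]; exact one_ne_zero)
  have hg1 : Integrable fun v => (g v : ℂ) := by
    rw [hg]
    exact (integrable_exp_neg_mul_norm_div_norm hlam).ofReal
  have hg2 : MemLp (fun v => (g v : ℂ)) 2 volume := by
    rw [hg]
    exact (memLp_exp_neg_mul_norm_div_norm hlam).ofReal
  set F : EuclideanSpace ℝ (Fin 3) → Lp ℂ 2 (volume : Measure (EuclideanSpace ℝ (Fin 3))) :=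
    fun w => p w • (DomAddAct.mk (-w) +ᵥ hg2.toLp _) with hF_def
  have hF : Continuous F := continuous_smul_translate hp _
  have hUF : Integrable fun w => (U w : ℂ) • F w :=
    integrable_ofReal_smul_of_hasCompactSupport hUi hU_supp hF
  have hUp : Integrable fun w => (U w : ℂ) • p w :=
    integrable_ofReal_smul_of_hasCompactSupport hUi hU_supp hp
  have hlim := tendsto_inv_smul_sum_of_continuous hU_supp hx_supp hA hF hUF
  have hΨ' : ∀ N : ℕ, ((N : ℂ)⁻¹ • ∑ j : Fin N, F (x N j) : Lp ℂ 2 volume) =ᵐ[volume] Ψ N :=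
    fun N => by
      rw [hΨ N]
      exact coeFn_inv_smul_sum_translate hg2 p (x N)
  have hconv' : (∫ w, (U w : ℂ) • F w : Lp ℂ 2 volume) =ᵐ[volume] conv := by
    simp only [hF_def, smul_smul] at hUF ⊢
    refine (integral_smul_translate_ae_eq hg1 hg2 hUp hUF).trans (.of_forall fun y => ?_)
    simp only [hconv, smul_eq_mul]
    congr 1
    funext w
    ring
  constructor
  · refine ((Lp.tendsto_Lp_iff_tendsto_eLpNorm' _ _).1 hlim).congr fun N => ?_
    exact eLpNorm_congr_ae ((hΨ' N).sub hconv')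
  · have := hlim.enorm
    simp only [Lp.enorm_def] at this
    rw [← eLpNorm_congr_ae hconv']
    exact this.congr fun N => eLpNorm_congr_ae (hΨ' N)
end
end
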